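/- Let P, Q ∈ R[y] with deg P = p ≥ 1 over a real closed field R. Knowing the signs of all principal minors of the Hermite matrices Her(P;A) for all polynomials A that are products of at most bit(p) of the derivatives P', P'', …, P^{(p−1)} each raised to the power 1 or 2, optionally multiplied by Q or Q², determines the Thom encoding of each real root of P and the sign of Q at each such root. -/

import Mathlib

open Polynomial

/-- The sign of a real number as an integer. -/
noncomputable def sgn (a : ℝ) : ℤ := if a < 0 then -1 else if a = 0 then 0 else 1

/-- The bit-length function: `bit 0 = 1` and, for `p ≥ 1`, `bit p = k` iff `2^{k-1} ≤ p < 2^k`. -/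
def bit (p : ℕ) : ℕ := if p = 0 then 1 else Nat.log 2 p + 1

/-- The `p × p` Hermite matrix of `P` and `A`: its `(j₁, j₂)` entry (zero-based) is the trace of
multiplication by `A·y^{j₁+j₂}` on `ℝ[y]/(P)`. -/
noncomputable def HerMat (p : ℕ) (P A : Polynomial ℝ) : Matrix (Fin p) (Fin p) ℝ :=
  fun j₁ j₂ =>
    LinearMap.trace ℝ (AdjoinRoot P)
      (LinearMap.mulLeft ℝ (AdjoinRoot.mk P (A * X ^ (j₁.val + j₂.val))))

/-- The principal minor of size `m` of a `p × p` matrix (determinant of the top-left `m × m`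
submatrix). -/
noncomputable def pMinor (p : ℕ) (M : Matrix (Fin p) (Fin p) ℝ) (m : ℕ) (h : m ≤ p) : ℝ :=
  (M.submatrix (Fin.castLE h) (Fin.castLE h)).det

/-- The product `Π_{1≤h≤p-1} (P^{(h)})^{α h} · Q^b`. -/
noncomputable def pderProd (p : ℕ) (P Q : Polynomial ℝ) (α : ℕ → ℕ) (b : ℕ) : Polynomial ℝ :=
  (∏ h ∈ Finset.Icc 1 (p - 1), (Polynomial.derivative^[h] P) ^ (α h)) * Q ^ b

/-- Admissible exponent data: each derivative appears with power `0`, `1` or `2`, `Q` appears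
with power `0`, `1` or `2`, and in total at most `bit p` of the polynomials
`P', …, P^{(p-1)}, Q` occur. -/
def admissible (p : ℕ) (α : ℕ → ℕ) (b : ℕ) : Prop :=
  (∀ h, α h ≤ 2) ∧ b ≤ 2 ∧
    ((Finset.Icc 1 (p - 1)).filter (fun h => α h ≠ 0)).card + (if b = 0 then 0 else 1) ≤ bit p

/-- determinant of a polynomial in a complex matrix. -/
lemma det_aeval_cx {n : ℕ} (M : Matrix (Fin n) (Fin n) ℂ) (h : ℂ[X]) :
    (aeval M h).det = (M.charpoly.roots.map (fun z => h.eval z)).prod := by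
  have hs : h.Splits := IsAlgClosed.splits h
  have hcard : M.charpoly.roots.card = n := by
    rw [← (IsAlgClosed.splits M.charpoly).natDegree_eq_card_roots, Matrix.charpoly_natDegree_eq_dim]
    simp
  have hM : M.charpoly = (M.charpoly.roots.map (fun z => X - C z)).prod :=
    (IsAlgClosed.splits M.charpoly).eq_prod_roots_of_monic (Matrix.charpoly_monic M)
  let φ : ℂ[X] →* ℂ := Matrix.detMonoidHom.comp (aeval M : ℂ[X] →ₐ[ℂ] _).toRingHom.toMonoidHom
  let ψ : ℂ[X] →* ℂ :=
    { toFun := fun h => (M.charpoly.roots.map (fun z => h.eval z)).prod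
      map_one' := by simp
      map_mul' := by intro a b; simp [Multiset.prod_map_mul] }
  have hlin : ∀ ν : ℂ, φ (X - C ν) = ψ (X - C ν) := by
    intro ν
    have e1 : φ (X - C ν) = (M - algebraMap ℂ _ ν).det := by
      simp [φ, Matrix.detMonoidHom]
    have e2 : (M - algebraMap ℂ _ ν).det = (-1) ^ n * M.charpoly.eval ν := by
      rw [Matrix.eval_charpoly, ← neg_sub, Matrix.det_neg]
      simp [Matrix.algebraMap_eq_diagonal, Matrix.scalar_apply]
      rfl
    have e3 : M.charpoly.eval ν = (M.charpoly.roots.map (fun z => ν - z)).prod := by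
      conv_lhs => rw [hM]
      rw [eval_multiset_prod]
      simp
    have e4 : ψ (X - C ν) = (M.charpoly.roots.map (fun z => z - ν)).prod := by
      simp [ψ]
    rw [e1, e2, e3, e4]
    have : (fun z => z - ν) = (fun z : ℂ => (-1) * (ν - z)) := by ext; ring
    rw [this, Multiset.prod_map_mul]
    simp [hcard]
  have hc : ∀ c : ℂ, φ (C c) = ψ (C c) := by
    intro c
    simp [φ, ψ, Matrix.detMonoidHom, hcard, Matrix.algebraMap_eq_diagonal]
  change φ h = ψ h
  rw [hs.eq_prod_roots, map_mul, map_mul, hc, map_multiset_prod, map_multiset_prod]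
  congr 2
  rw [Multiset.map_map, Multiset.map_map]
  apply Multiset.map_congr rfl
  intro ν _
  exact hlin ν

lemma trace_aeval_cx {n : ℕ} (M : Matrix (Fin n) (Fin n) ℂ) (g : ℂ[X]) :
    (aeval M g).trace = (M.charpoly.roots.map (fun z => g.eval z)).sum := by
  have key : (aeval M g).charpoly =
      ((M.charpoly.roots.map (fun z => g.eval z)).map (fun w => X - C w)).prod := by
    apply Polynomial.funext
    intro t
    have h1 := det_aeval_cx M (C t - g)
    rw [Matrix.eval_charpoly, eval_multiset_prod]
    simp only [map_sub, aeval_C, eval_sub, eval_C] at h1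
    simp only [Multiset.map_map, Function.comp_def, eval_sub, eval_X, eval_C]
    rw [← h1]
    simp [Matrix.algebraMap_eq_diagonal, Matrix.scalar_apply]
    rfl
  rw [Matrix.trace_eq_sum_roots_charpoly, key, roots_multiset_prod_X_sub_C]

lemma trace_formula (P : ℝ[X]) (hP : P ≠ 0) (g : ℝ[X]) :
    ((LinearMap.trace ℝ (AdjoinRoot P) (LinearMap.mulLeft ℝ (AdjoinRoot.mk P g)) : ℝ) : ℂ) =
      ((P.map Complex.ofRealHom).roots.map (fun z => (g.map Complex.ofRealHom).eval z)).sum := by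
  let pb := AdjoinRoot.powerBasis hP
  let M := Algebra.leftMulMatrix pb.basis pb.gen
  have h1 : LinearMap.trace ℝ (AdjoinRoot P) (LinearMap.mulLeft ℝ (AdjoinRoot.mk P g)) =
      (aeval M g).trace := by
    have : aeval M g = Algebra.leftMulMatrix pb.basis (aeval pb.gen g) := by
      rw [← aeval_algHom_apply]
    rw [this, ← Algebra.trace_eq_matrix_trace pb.basis]
    have : aeval pb.gen g = AdjoinRoot.mk P g := by
      simp [pb, AdjoinRoot.aeval_eq]
    rw [this]
    rfl
  have h2 : (M.map Complex.ofRealHom).charpoly.roots = (P.map Complex.ofRealHom).roots := by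
    rw [Matrix.charpoly_map, charpoly_leftMulMatrix]
    have : minpoly ℝ pb.gen = P * C P.leadingCoeff⁻¹ := by
      simpa [pb] using AdjoinRoot.minpoly_root hP
    rw [this, Polynomial.map_mul, Polynomial.map_C, mul_comm, roots_C_mul]
    simpa using hP
  rw [h1, ← h2, ← trace_aeval_cx]
  have h3 : aeval (M.map Complex.ofRealHom) (g.map Complex.ofRealHom) =
      (aeval M g).map Complex.ofRealHom := by
    have : (aeval M g).map Complex.ofRealHom = Complex.ofRealHom.mapMatrix (aeval M g) := rfl
    rw [this, aeval_def, aeval_def, eval₂_map, hom_eval₂]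
    congr 1
    apply RingHom.ext
    intro a
    rw [RingHom.comp_apply, RingHom.comp_apply, Matrix.algebraMap_eq_diagonal,
      Matrix.algebraMap_eq_diagonal]
    ext i j
    by_cases hij : i = j <;> simp [Matrix.diagonal, hij]
  rw [h3]
  simp [Matrix.trace]
/-- moment of a signed weight on sign vectors. -/
def momt {j : ℕ} (w : (Fin j → SignType) → ℤ) (α : Fin j → ℕ) : ℤ :=
  ∑ x, w x * ∏ i, ((x i : ℤ)) ^ α i

/-- number of nonzero exponents. -/
def nsupp {j : ℕ} (α : Fin j → ℕ) : ℕ := ∑ i, if α i = 0 then 0 else 1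

/-- moments in the first coordinate. -/
def numo {j : ℕ} (i : ℕ) (w : (Fin (j + 1) → SignType) → ℤ) (y : Fin j → SignType) : ℤ :=
  ∑ a : SignType, (a : ℤ) ^ i * w (Fin.cons a y)

lemma momt_numo {j : ℕ} (i : ℕ) (w : (Fin (j + 1) → SignType) → ℤ) (α : Fin j → ℕ) :
    momt (numo i w) α = momt w (Fin.cons i α) := by
  unfold momt numo
  rw [← (Fin.consEquiv (fun _ => SignType)).sum_comp, Fintype.sum_prod_type, Finset.sum_comm]
  apply Finset.sum_congr rfl
  intro y _
  rw [Finset.sum_mul]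
  apply Finset.sum_congr rfl
  intro a _
  simp [Fin.consEquiv, Fin.prod_univ_succ]
  ring

lemma nsupp_cons {j : ℕ} (i : ℕ) (α : Fin j → ℕ) :
    nsupp (Fin.cons i α : Fin (j + 1) → ℕ) = (if i = 0 then 0 else 1) + nsupp α := by
  simp [nsupp, Fin.sum_univ_succ]

lemma sum_signType (f : SignType → ℤ) : ∑ a, f a = f (-1) + f 0 + f 1 := by
  have : (Finset.univ : Finset SignType) = {-1, 0, 1} := by decide
  rw [this]
  rw [Finset.sum_insert (by decide), Finset.sum_insert (by decide), Finset.sum_singleton]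
  ring

lemma vander {j : ℕ} (w : (Fin (j + 1) → SignType) → ℤ) (y : Fin j → SignType)
    (h0 : numo 0 w y = 0) (h1 : numo 1 w y = 0) (h2 : numo 2 w y = 0) (a : SignType) :
    w (Fin.cons a y) = 0 := by
  simp only [numo, sum_signType] at h0 h1 h2
  simp at h0 h1 h2
  have ha : a = -1 ∨ a = 0 ∨ a = 1 := by revert a; decide
  rcases ha with rfl | rfl | rfl <;> omega

lemma cons_le_two {j : ℕ} {i : ℕ} {α : Fin j → ℕ} (hi : i ≤ 2) (h : ∀ k, α k ≤ 2) :
    ∀ k, (Fin.cons i α : Fin (j + 1) → ℕ) k ≤ 2 := by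
  intro k
  refine Fin.cases ?_ ?_ k
  · simpa
  · intro k; simpa using h k

lemma spanD : ∀ (j : ℕ) (w : (Fin j → SignType) → ℤ) (T : Finset (Fin j → SignType)),
    (∀ x, x ∉ T → w x = 0) →
    (∀ α : Fin j → ℕ, (∀ i, α i ≤ 2) → 2 ^ nsupp α ≤ T.card → momt w α = 0) →
    ∀ x, w x = 0 := by
  intro j
  induction j with
  | zero =>
    intro w T hT hm x
    by_cases hx : x ∈ T
    · have := hm (fun _ => 0) (by simp) (by
        simp [nsupp]; exact ⟨x, hx⟩)
      simp [momt] at this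
      convert this using 1 <;> exact congrArg _ (Subsingleton.elim _ _)
    · exact hT x hx
  | succ j ih =>
    intro w T hT hm
    have h0 : ∀ y, numo 0 w y = 0 := by
      apply ih (numo 0 w) (T.image Fin.tail)
      · intro y hy
        apply Finset.sum_eq_zero
        intro a _
        rw [hT, mul_zero]
        intro hc
        apply hy
        exact Finset.mem_image.2 ⟨_, hc, by simp⟩
      · intro α hα hc
        rw [momt_numo]
        apply hm _ (cons_le_two (by norm_num) hα)
        rw [nsupp_cons]
        simp only [if_true, zero_add]
        exact hc.trans Finset.card_image_le
    classical
    let T2 : Finset (Fin j → SignType) := Finset.univ.filter (fun y =>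
      ∃ a b : SignType, a ≠ b ∧ (Fin.cons a y : Fin (j + 1) → SignType) ∈ T ∧
        (Fin.cons b y : Fin (j + 1) → SignType) ∈ T)
    let tl : (Fin (j + 1) → SignType) → (Fin j → SignType) := fun x => Fin.tail x
    have hT2 : 2 * T2.card ≤ T.card := by
      have e := Finset.card_eq_sum_card_fiberwise (s := T.filter (fun x => tl x ∈ T2))
        (t := T2) (f := tl) (by intro x hx; simpa using (Finset.mem_filter.1 hx).2)
      have : ∑ y ∈ T2, 2 ≤ (T.filter (fun x => tl x ∈ T2)).card := by
        rw [e]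
        apply Finset.sum_le_sum
        intro y hy
        obtain ⟨a, b, hab, ha, hb⟩ := (Finset.mem_filter.1 hy).2
        apply Finset.one_lt_card.2
        refine ⟨Fin.cons a y, by simp [ha, hy, tl], Fin.cons b y, by simp [hb, hy, tl], ?_⟩
        intro h
        apply hab
        have := congrFun h 0
        simpa using this
      have h3 := Finset.card_filter_le T (fun x => tl x ∈ T2)
      simp at this
      omega
    have hout : ∀ y, y ∉ T2 → ∀ a, w (Fin.cons a y) = 0 := by
      intro y hy a
      by_cases ha : (Fin.cons a y : Fin (j + 1) → SignType) ∈ T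
      · have := h0 y
        unfold numo at this
        rw [Finset.sum_eq_single a] at this
        · simpa using this
        · intro b _ hb
          rw [hT, mul_zero]
          intro hc
          exact hy (Finset.mem_filter.2 ⟨Finset.mem_univ _, a, b, hb.symm, ha, hc⟩)
        · simp
      · exact hT _ ha
    have hi : ∀ i, i = 1 ∨ i = 2 → ∀ y, numo i w y = 0 := by
      intro i hi
      apply ih (numo i w) T2
      · intro y hy
        apply Finset.sum_eq_zero
        intro a _
        rw [hout y hy, mul_zero]
      · intro α hα hc
        rw [momt_numo]
        apply hm _ (cons_le_two (by omega) hα)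
        rw [nsupp_cons, if_neg (by omega), pow_add]
        omega
    intro x
    rw [← Fin.cons_self_tail x]
    exact vander w _ (h0 _) (hi 1 (by simp) _) (hi 2 (by simp) _) _

lemma signdet (p : ℕ) (hp : 1 ≤ p) : ∀ (j : ℕ) (c d : (Fin j → SignType) → ℤ),
    (∀ x, 0 ≤ c x) → (∀ x, 0 ≤ d x) → (∑ x, c x ≤ p) →
    (∀ α : Fin j → ℕ, (∀ i, α i ≤ 2) → nsupp α ≤ bit p → momt c α = momt d α) →
    ∀ x, c x = d x := by
  intro j
  induction j with
  | zero =>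
    intro c d _ _ _ hm x
    have := hm (fun _ => 0) (by simp) (by simp [nsupp])
    simp [momt] at this
    convert this using 1 <;> exact congrArg _ (Subsingleton.elim _ _)
  | succ j ih =>
    intro c d hc hd hcp hm
    have hnn : ∀ w : (Fin (j + 1) → SignType) → ℤ, (∀ x, 0 ≤ w x) → ∀ y, 0 ≤ numo 0 w y := by
      intro w hw y
      apply Finset.sum_nonneg
      intro a _
      simpa using hw _
    have hsum : ∑ y, numo 0 c y ≤ p := by
      have := momt_numo 0 c (fun _ => 0)
      have e : (Fin.cons 0 (fun _ => 0) : Fin (j + 1) → ℕ) = fun _ => 0 := by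
        ext k; refine Fin.cases ?_ ?_ k <;> simp
      rw [e] at this
      simp [momt] at this
      rw [this]; exact hcp
    have h0 : ∀ y, numo 0 c y = numo 0 d y := by
      apply ih _ _ (hnn c hc) (hnn d hd) hsum
      intro α hα hs
      rw [momt_numo, momt_numo]
      apply hm _ (cons_le_two (by norm_num) hα)
      rw [nsupp_cons]; simpa using hs
    let w : (Fin (j + 1) → SignType) → ℤ := fun x => c x - d x
    have hnu : ∀ i y, numo i w y = numo i c y - numo i d y := by
      intro i y
      simp [numo, w, mul_sub, Finset.sum_sub_distrib]
    have hmo : ∀ α, momt w α = momt c α - momt d α := by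
      intro α
      simp [momt, w, sub_mul, Finset.sum_sub_distrib]
    let T : Finset (Fin j → SignType) := Finset.univ.filter (fun y => numo 0 c y ≠ 0)
    have hTp : T.card ≤ p := by
      have : (T.card : ℤ) ≤ ∑ y, numo 0 c y := by
        rw [Finset.card_eq_sum_ones, Nat.cast_sum]
        calc ∑ y ∈ T, ((1 : ℕ) : ℤ) ≤ ∑ y ∈ T, numo 0 c y := by
              apply Finset.sum_le_sum
              intro y hy
              have h1 := (Finset.mem_filter.1 hy).2
              have h2 := hnn c hc y
              push_cast
              omega
          _ ≤ _ := Finset.sum_le_univ_sum_of_nonneg (hnn c hc)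
      exact_mod_cast this.trans hsum
    have hz : ∀ v : (Fin (j + 1) → SignType) → ℤ, (∀ x, 0 ≤ v x) → ∀ y, numo 0 v y = 0 →
        ∀ a, v (Fin.cons a y) = 0 := by
      intro v hv y h a
      unfold numo at h
      rw [Finset.sum_eq_zero_iff_of_nonneg] at h
      · simpa using h a (Finset.mem_univ _)
      · intro a _; simpa using hv _
    have hi : ∀ i, i = 1 ∨ i = 2 → ∀ y, numo i w y = 0 := by
      intro i hi
      apply spanD j (numo i w) T
      · intro y hy
        have h1 : numo 0 c y = 0 := by
          by_contra h
          exact hy (Finset.mem_filter.2 ⟨Finset.mem_univ _, h⟩)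
        apply Finset.sum_eq_zero
        intro a _
        simp only [w]
        rw [hz c hc y h1, hz d hd y (h0 y ▸ h1)]
        simp
      · intro α hα hc
        rw [momt_numo, hmo, sub_eq_zero]
        apply hm _ (cons_le_two (by omega) hα)
        rw [nsupp_cons, if_neg (by omega)]
        have : nsupp α ≤ Nat.log 2 p := Nat.le_log_of_pow_le (by norm_num) (hc.trans hTp)
        unfold bit
        rw [if_neg (by omega)]
        omega
    intro x
    have := vander w (Fin.tail x) (by rw [hnu, h0, sub_self]) (hi 1 (by simp) _)
      (hi 2 (by simp) _) (x 0)
    rw [Fin.cons_self_tail] at this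
    simp only [w] at this
    omega
/-- A quadratic form written as a combination of `a` positive and `b` negative squares of
independent linear forms. -/
def SqRep {V : Type} [AddCommGroup V] [Module ℝ V] (q : V → ℝ) (a b : ℕ) : Prop :=
  ∃ (κ : Type) (_ : Fintype κ) (l : V →ₗ[ℝ] (κ → ℝ)) (ε : κ → ℝ), Function.Surjective l ∧
    (∀ i, ε i ≠ 0) ∧ (∀ v, q v = ∑ i, ε i * (l v i) ^ 2) ∧
    Nat.card {i // 0 < ε i} = a ∧ Nat.card {i // ε i < 0} = b

lemma SqRep.neg {V : Type} [AddCommGroup V] [Module ℝ V] {q : V → ℝ} {a b : ℕ}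
    (h : SqRep q a b) : SqRep (fun v => - q v) b a := by
  obtain ⟨κ, _, l, ε, hl, hε, hq, ha, hb⟩ := h
  refine ⟨κ, inferInstance, l, fun i => - ε i, hl, by simpa using hε, ?_, ?_, ?_⟩
  · intro v; simp [hq]
  · simpa using hb
  · simpa using ha

lemma SqRep.section_pos {V : Type} [AddCommGroup V] [Module ℝ V] {q : V → ℝ} {a b : ℕ}
    (h : SqRep q a b) : ∃ s : (Fin a → ℝ) →ₗ[ℝ] V, ∀ x, x ≠ 0 → 0 < q (s x) := by
  classical
  obtain ⟨κ, _, l, ε, hl, hε, hq, ha, hb⟩ := h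
  obtain ⟨r, hr⟩ := LinearMap.exists_rightInverse_of_surjective l (LinearMap.range_eq_top.2 hl)
  let e : {i // 0 < ε i} ≃ Fin a := Finite.equivFinOfCardEq ha
  let t : (Fin a → ℝ) →ₗ[ℝ] (κ → ℝ) := LinearMap.pi (fun i =>
    if h : 0 < ε i then LinearMap.proj (e ⟨i, h⟩) else 0)
  refine ⟨r.comp t, ?_⟩
  intro x hx
  have hlr : ∀ y, l (r y) = y := fun y => by
    have := LinearMap.congr_fun hr y
    simpa using this
  rw [hq]
  simp only [LinearMap.comp_apply, hlr]
  obtain ⟨k, hk⟩ : ∃ k, x k ≠ 0 := by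
    by_contra hcon
    push Not at hcon
    exact hx (funext hcon)
  apply Finset.sum_pos'
  · intro i _
    by_cases hi : 0 < ε i
    · positivity
    · simp [t, hi]
  · refine ⟨(e.symm k).1, Finset.mem_univ _, ?_⟩
    have h1 := (e.symm k).2
    have : t x (e.symm k).1 = x k := by
      simp [t, h1]
    rw [this]
    positivity

lemma SqRep.le_pos {V W : Type} [AddCommGroup V] [Module ℝ V] [AddCommGroup W] [Module ℝ W]
    [FiniteDimensional ℝ V] [FiniteDimensional ℝ W] {q : V → ℝ} {a b : ℕ}
    (h : SqRep q a b) (hd : Module.finrank ℝ V = a + b) (φ : W →ₗ[ℝ] V)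
    (hφ : Function.Injective φ) (hpos : ∀ w, 0 ≤ q (φ w)) : Module.finrank ℝ W ≤ a := by
  classical
  obtain ⟨κ, _, l, ε, hl, hε, hq, ha, hb⟩ := h
  have hcard : Fintype.card κ = a + b := by
    rw [← ha, ← hb, ← Nat.card_eq_fintype_card, ← Nat.card_sum]
    apply Nat.card_congr
    refine (Equiv.sumCompl (fun i => 0 < ε i)).symm.trans (Equiv.sumCongr (Equiv.refl _) ?_)
    apply Equiv.subtypeEquivRight
    intro i
    have := hε i
    constructor
    · intro h; exact lt_of_le_of_ne (not_lt.1 h) this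
    · intro h; exact not_lt.2 h.le
  have hinj : Function.Injective l := by
    apply (LinearMap.injective_iff_surjective_of_finrank_eq_finrank _).2 hl
    rw [hd]; simp [hcard]
  let ψ : W →ₗ[ℝ] ({i // 0 < ε i} → ℝ) := LinearMap.pi (fun i => (LinearMap.proj i.1).comp (l.comp φ))
  have hψ : Function.Injective ψ := by
    rw [injective_iff_map_eq_zero]
    intro w hw
    apply hφ
    apply hinj
    rw [map_zero, map_zero]
    have h1 : ∀ i, 0 < ε i → l (φ w) i = 0 := fun i hi => by
      simpa [ψ] using congrFun hw ⟨i, hi⟩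
    have h2 : ∀ i, ε i * (l (φ w) i) ^ 2 ≤ 0 := by
      intro i
      by_cases hi : 0 < ε i
      · simp [h1 i hi]
      · exact mul_nonpos_of_nonpos_of_nonneg (not_lt.1 hi) (sq_nonneg _)
    have h3 : ∑ i, ε i * (l (φ w) i) ^ 2 = 0 :=
      le_antisymm (Finset.sum_nonpos (fun i _ => h2 i)) (hq (φ w) ▸ hpos w)
    rw [Finset.sum_eq_zero_iff_of_nonpos (fun i _ => h2 i)] at h3
    ext i
    have := h3 i (Finset.mem_univ _)
    simpa [hε i] using this
  have := LinearMap.finrank_le_finrank_of_injective hψ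
  rw [← ha, Nat.card_eq_fintype_card]
  simpa using this

lemma SqRep.pos_le {V : Type} [AddCommGroup V] [Module ℝ V]
    [FiniteDimensional ℝ V] {q : V → ℝ} {a b a' b' : ℕ}
    (h : SqRep q a b) (h' : SqRep q a' b') (hd : Module.finrank ℝ V = a' + b') : a ≤ a' := by
  obtain ⟨s, hs⟩ := h.section_pos
  have := h'.le_pos hd s ?_ ?_
  · simpa using this
  · rw [injective_iff_map_eq_zero]
    intro x hx
    by_contra hne
    have h1 := hs x hne
    rw [hx] at h1
    obtain ⟨κ, _, l, ε, hl, hε, hq, ha, hb⟩ := h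
    rw [hq] at h1
    simp at h1
  · intro w
    by_cases hw : w = 0
    · subst hw
      obtain ⟨κ, _, l, ε, hl, hε, hq, ha, hb⟩ := h
      rw [hq]; simp
    · exact (hs w hw).le

lemma SqRep.unique {V : Type} [AddCommGroup V] [Module ℝ V]
    [FiniteDimensional ℝ V] {q : V → ℝ} {a b a' b' : ℕ}
    (h : SqRep q a b) (h' : SqRep q a' b') (hd : Module.finrank ℝ V = a + b)
    (hd' : Module.finrank ℝ V = a' + b') : a = a' ∧ b = b' := by
  have h1 := h.pos_le h' hd'
  have h2 := h'.pos_le h hd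
  omega

/-- The polynomial with given coefficients. -/
noncomputable def polOf (n : ℕ) : (Fin n → ℝ) →ₗ[ℝ] ℝ[X] :=
  (degreeLT ℝ n).subtype.comp (degreeLTEquiv ℝ n).symm.toLinearMap

/-- The first coefficients. -/
noncomputable def coefs (n : ℕ) : ℝ[X] →ₗ[ℝ] (Fin n → ℝ) :=
  LinearMap.pi (fun i => lcoeff ℝ i.1)

lemma polOf_mem (n : ℕ) (c : Fin n → ℝ) : polOf n c ∈ degreeLT ℝ n := by
  simp [polOf]

lemma polOf_eq (n : ℕ) (c : Fin n → ℝ) : polOf n c = ∑ i, c i • X ^ i.1 := by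
  simp [polOf, degreeLTEquiv, smul_X_eq_monomial]

lemma coefs_polOf (n : ℕ) (c : Fin n → ℝ) : coefs n (polOf n c) = c := by
  have : coefs n (polOf n c) = degreeLTEquiv ℝ n ((degreeLTEquiv ℝ n).symm c) := rfl
  rw [this]; simp

lemma polOf_coefs (n : ℕ) {f : ℝ[X]} (hf : f ∈ degreeLT ℝ n) : polOf n (coefs n f) = f := by
  have : coefs n f = degreeLTEquiv ℝ n ⟨f, hf⟩ := rfl
  rw [this]
  simp [polOf]

/-- Hankel matrix of a functional. -/
noncomputable def hank (L : ℝ[X] →ₗ[ℝ] ℝ) (n : ℕ) : Matrix (Fin n) (Fin n) ℝ :=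
  fun i j => L (X ^ (i.1 + j.1))

lemma hank_form (L : ℝ[X] →ₗ[ℝ] ℝ) (n : ℕ) (c d : Fin n → ℝ) :
    L (polOf n c * polOf n d) = c ⬝ᵥ (hank L n).mulVec d := by
  rw [polOf_eq, polOf_eq, Finset.sum_mul_sum]
  simp only [map_sum, dotProduct, Matrix.mulVec, hank, Finset.mul_sum]
  apply Finset.sum_congr rfl; intro i _
  apply Finset.sum_congr rfl; intro j _
  rw [smul_mul_smul_comm, map_smul, ← pow_add]
  simp only [smul_eq_mul]; ring

/-- nondegeneracy of the form `L (f g)` in degree `< n`. -/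
def NDeg (L : ℝ[X] →ₗ[ℝ] ℝ) (n : ℕ) : Prop :=
  ∀ f ∈ degreeLT ℝ n, (∀ g ∈ degreeLT ℝ n, L (f * g) = 0) → f = 0

lemma ndeg_iff (L : ℝ[X] →ₗ[ℝ] ℝ) (n : ℕ) : NDeg L n ↔ (hank L n).det ≠ 0 := by
  rw [← not_iff_not, not_not, ← Matrix.exists_mulVec_eq_zero_iff]
  unfold NDeg
  push Not
  constructor
  · rintro ⟨f, hf, hg, hne⟩
    refine ⟨coefs n f, ?_, ?_⟩
    · intro h
      apply hne
      rw [← polOf_coefs n hf, h, map_zero]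
    · apply dotProduct_eq_zero
      intro d
      rw [dotProduct_comm, ← hank_form, mul_comm, polOf_coefs n hf]
      exact hg _ (polOf_mem _ _)
  · rintro ⟨c, hc, h⟩
    refine ⟨polOf n c, polOf_mem _ _, ?_, ?_⟩
    · intro g hg
      rw [← polOf_coefs n hg, mul_comm, hank_form, h, dotProduct_zero]
    · intro h0
      apply hc
      rw [← coefs_polOf n c, h0, map_zero]

lemma NDeg.neg {L : ℝ[X] →ₗ[ℝ] ℝ} {n : ℕ} (h : NDeg L n) : NDeg (-L) n := by
  intro f hf hg
  apply h f hf
  intro g hgm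
  simpa using hg g hgm

/-- quadratic form of a functional. -/
noncomputable def qf (L : ℝ[X] →ₗ[ℝ] ℝ) (n : ℕ) (c : Fin n → ℝ) : ℝ := L (polOf n c * polOf n c)

lemma sgn_prod {κ : Type} [Fintype κ] (ε : κ → ℝ) (hε : ∀ i, ε i ≠ 0) :
    sgn (∏ i, ε i) = (-1) ^ (Nat.card {i // ε i < 0}) := by
  classical
  have hmul : ∀ x y : ℝ, sgn (x * y) = sgn x * sgn y := by
    intro x y
    unfold sgn
    rcases lt_trichotomy x 0 with hx | hx | hx <;> rcases lt_trichotomy y 0 with hy | hy | hy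
    · have := mul_pos_of_neg_of_neg hx hy
      simp [hx, hy, this.not_gt, this.ne']
    · simp [hx, hy]
    · have := mul_neg_of_neg_of_pos hx hy
      simp [hx, hy.not_gt, hy.ne', this]
    · simp [hx]
    · simp [hx]
    · simp [hx]
    · have := mul_neg_of_pos_of_neg hx hy
      simp [hy, hx.not_gt, hx.ne', this]
    · simp [hy]
    · have := mul_pos hx hy
      simp [hx.not_gt, hx.ne', hy.not_gt, hy.ne', this.not_gt, this.ne']
  have h1 : sgn 1 = 1 := by simp [sgn]
  let φ : ℝ →* ℤ := { toFun := sgn, map_one' := h1, map_mul' := hmul }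
  have : sgn (∏ i, ε i) = ∏ i, sgn (ε i) := map_prod φ _ _
  rw [this]
  have h2 : ∀ i, sgn (ε i) = if ε i < 0 then -1 else 1 := by
    intro i; simp [sgn, hε i]
  simp only [h2, Finset.prod_ite, Finset.prod_const, one_pow, mul_one]
  rw [Nat.card_eq_fintype_card, Fintype.card_subtype]

lemma exists_rep (L : ℝ[X] →ₗ[ℝ] ℝ) (n : ℕ) (h : (hank L n).det ≠ 0) :
    ∃ a b, a + b = n ∧ SqRep (qf L n) a b ∧ sgn (hank L n).det = (-1) ^ b := by
  classical
  have hH : (hank L n).IsHermitian := by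
    ext i j
    simp [hank, add_comm]
  have hdet : (hank L n).det = ∏ i, hH.eigenvalues i := by
    simpa using hH.det_eq_prod_eigenvalues
  have hne : ∀ i, hH.eigenvalues i ≠ 0 := by
    rw [hdet] at h
    intro i
    exact Finset.prod_ne_zero_iff.1 h i (Finset.mem_univ _)
  let U : Matrix (Fin n) (Fin n) ℝ := hH.eigenvectorUnitary
  have hU1 : U * star U = 1 := Unitary.coe_mul_star_self hH.eigenvectorUnitary
  have hU2 : star U * U = 1 := Unitary.coe_star_mul_self hH.eigenvectorUnitary
  have hspec : hank L n = U * Matrix.diagonal hH.eigenvalues * star U := by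
    have := hH.spectral_theorem
    rw [Unitary.conjStarAlgAut_apply] at this
    exact this
  refine ⟨_, _, ?_, ⟨Fin n, inferInstance, (star U).mulVecLin, hH.eigenvalues, ?_, hne, ?_, rfl, rfl⟩, ?_⟩
  · rw [← Nat.card_sum]
    conv_rhs => rw [← Nat.card_fin n]
    apply Nat.card_congr
    symm
    refine (Equiv.sumCompl (fun i => 0 < hH.eigenvalues i)).symm.trans (Equiv.sumCongr (Equiv.refl _) ?_)
    apply Equiv.subtypeEquivRight
    intro i
    have := hne i
    constructor
    · intro h; exact lt_of_le_of_ne (not_lt.1 h) this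
    · intro h; exact not_lt.2 h.le
  · intro y
    refine ⟨U.mulVec y, ?_⟩
    simp [hU2]
  · intro c
    unfold qf
    rw [hank_form]
    have e0 : c ⬝ᵥ (hank L n).mulVec c =
      c ⬝ᵥ (U * Matrix.diagonal hH.eigenvalues * star U).mulVec c := by rw [← hspec]
    rw [e0, ← Matrix.mulVec_mulVec, ← Matrix.mulVec_mulVec, Matrix.dotProduct_mulVec]
    have : Matrix.vecMul c U = (star U).mulVec c := by
      rw [Matrix.star_eq_conjTranspose, Matrix.conjTranspose_eq_transpose_of_trivial,
        Matrix.mulVec_transpose]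
    rw [this]
    simp only [dotProduct, Matrix.mulVec_diagonal, Matrix.mulVecLin_apply]
    apply Finset.sum_congr rfl
    intro i _
    ring
  · rw [hdet, sgn_prod _ hne]
lemma mul_memLT {f g : ℝ[X]} {a b c : ℕ} (hf : f ∈ degreeLT ℝ a) (hg : g ∈ degreeLT ℝ b)
    (h : a + b ≤ c + 1) : f * g ∈ degreeLT ℝ c := by
  by_cases hf0 : f = 0
  · simp [hf0]
  by_cases hg0 : g = 0
  · simp [hg0]
  rw [mem_degreeLT] at *
  rw [degree_eq_natDegree hf0] at hf
  rw [degree_eq_natDegree hg0] at hg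
  rw [degree_mul, degree_eq_natDegree hf0, degree_eq_natDegree hg0]
  norm_cast at *
  omega

lemma orth_exists (L : ℝ[X] →ₗ[ℝ] ℝ) (i : ℕ) (h : (hank L i).det ≠ 0) :
    ∃ P : ℝ[X], P.Monic ∧ P.natDegree = i ∧ ∀ g ∈ degreeLT ℝ i, L (P * g) = 0 := by
  let bv : Fin i → ℝ := fun e => L (X ^ i * X ^ e.1)
  let c : Fin i → ℝ := (hank L i)⁻¹.mulVec bv
  have hc : (hank L i).mulVec c = bv := by
    simp only [c]
    rw [Matrix.mulVec_mulVec, Matrix.mul_nonsing_inv _ (isUnit_iff_ne_zero.2 h), Matrix.one_mulVec]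
  have hdeg : (polOf i c).degree < i := mem_degreeLT.1 (polOf_mem i c)
  refine ⟨X ^ i - polOf i c, ?_, ?_, ?_⟩
  · exact (monic_X_pow i).sub_of_left (by simpa using hdeg)
  · apply natDegree_eq_of_degree_eq_some
    rw [degree_sub_eq_left_of_degree_lt] <;> simp [hdeg]
  · intro g hg
    rw [sub_mul, map_sub, sub_eq_zero, ← polOf_coefs i hg, mul_comm (polOf i c), hank_form, hc]
    conv_lhs => rw [polOf_eq, Finset.mul_sum, map_sum]
    simp only [dotProduct, bv]
    apply Finset.sum_congr rfl
    intro e _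
    rw [mul_smul_comm, map_smul, smul_eq_mul]

lemma orth_ext (L : ℝ[X] →ₗ[ℝ] ℝ) (i n : ℕ) (hi : NDeg L i)
    (hz : ∀ m, i < m → m < n → ¬ NDeg L m) (P : ℝ[X]) (hP : P.Monic) (hPd : P.natDegree = i)
    (hO : ∀ g ∈ degreeLT ℝ i, L (P * g) = 0) :
    ∀ c, i ≤ c → c < n → ∀ g ∈ degreeLT ℝ c, L (P * g) = 0 := by
  intro c hc
  induction c, hc using Nat.le_induction with
  | base => intro _; exact hO
  | succ c hc ih =>
    intro hcn
    have ih := ih (by omega)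
    have key : L (P * X ^ c) = 0 := by
      by_contra ht
      apply hz (c + 1) (by omega) hcn
      intro f hf hfg
      have hdiv := modByMonic_add_div f P
      have hu : f %ₘ P ∈ degreeLT ℝ i := by
        rw [mem_degreeLT]
        have := degree_modByMonic_lt f hP
        rwa [degree_eq_natDegree hP.ne_zero, hPd] at this
      have hy : f /ₘ P ∈ degreeLT ℝ (c + 1 - i) := by
        by_cases h0 : f /ₘ P = 0
        · rw [h0]; exact Submodule.zero_mem _
        have hf0 : f ≠ 0 := by rintro rfl; simp at h0
        have h1 := natDegree_divByMonic f hP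
        rw [mem_degreeLT, degree_eq_natDegree h0]
        rw [mem_degreeLT, degree_eq_natDegree hf0] at hf
        norm_cast at *
        have : ¬ f.natDegree < P.natDegree := by
          intro hlt
          apply h0
          rw [divByMonic_eq_zero_iff hP]
          exact degree_lt_degree hlt
        omega
      have hu0 : f %ₘ P = 0 := by
        apply hi _ hu
        intro v hv
        have h1 := hfg v (degreeLT_mono (by omega) hv)
        rw [← hdiv, add_mul, map_add, mul_assoc, ih _ (mul_memLT hy hv (by omega)), add_zero] at h1
        exact h1
      rw [hu0, zero_add] at hdiv
      by_cases h0 : f /ₘ P = 0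
      · rw [← hdiv, h0, mul_zero]
      exfalso
      set y := f /ₘ P with hydef
      have hr : y.natDegree ≤ c := by
        rw [mem_degreeLT, degree_eq_natDegree h0] at hy
        norm_cast at hy
        omega
      have hX : (X ^ (c - y.natDegree) : ℝ[X]) ∈ degreeLT ℝ (c - y.natDegree + 1) := by
        rw [mem_degreeLT, degree_X_pow]
        norm_cast; omega
      have h1 := hfg (X ^ (c - y.natDegree)) (degreeLT_mono (by omega) hX)
      have he : y.eraseLead ∈ degreeLT ℝ y.natDegree := by
        rw [mem_degreeLT]
        have := degree_eraseLead_lt h0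
        rwa [degree_eq_natDegree h0] at this
      have h2 : f * X ^ (c - y.natDegree) =
          P * (y.eraseLead * X ^ (c - y.natDegree)) + y.leadingCoeff • (P * X ^ c) := by
        have hy2 : P * (y.eraseLead + C y.leadingCoeff * X ^ y.natDegree) = f := by
          rw [eraseLead_add_C_mul_X_pow, hdiv]
        rw [smul_eq_C_mul]
        have : (X ^ c : ℝ[X]) = X ^ y.natDegree * X ^ (c - y.natDegree) := by
          rw [← pow_add]; congr 1; omega
        rw [this, ← hy2]
        ring
      rw [h2, map_add, ih _ (mul_memLT he hX (by omega)), zero_add, map_smul, smul_eq_mul] at h1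
      rcases mul_eq_zero.1 h1 with h3 | h3
      · exact h0 (leadingCoeff_eq_zero.1 h3)
      · exact ht h3
    intro g hg
    have hg' : g - C (g.coeff c) * X ^ c ∈ degreeLT ℝ c := by
      rw [mem_degreeLT, degree_lt_iff_coeff_zero]
      intro m hm
      rw [mem_degreeLT, degree_lt_iff_coeff_zero] at hg
      rcases eq_or_lt_of_le hm with rfl | h
      · simp
      · simp [coeff_X_pow, hg m h, h.ne']
    have h1 := ih _ hg'
    have h2 : P * g = P * (g - C (g.coeff c) * X ^ c) + (g.coeff c) • (P * X ^ c) := by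
      rw [smul_eq_C_mul]; ring
    rw [h2, map_add, h1, map_smul, key, smul_zero, add_zero]

lemma step_pos (L : ℝ[X] →ₗ[ℝ] ℝ) (i n a b A B : ℕ) (hin : i < n) (hi : NDeg L i)
    (hz : ∀ m, i < m → m < n → ¬ NDeg L m)
    (ha : SqRep (qf L i) a b) (hA : SqRep (qf L n) A B) (hAB : A + B = n) :
    a + (n - i) / 2 ≤ A := by
  obtain ⟨P, hP, hPd, hO⟩ := orth_exists L i ((ndeg_iff L i).1 hi)
  have hO' := orth_ext L i n hi hz P hP hPd hO (n - 1) (by omega) (by omega)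
  obtain ⟨s, hs⟩ := ha.section_pos
  set k := (n - i) / 2 with hk
  have hPm : P ∈ degreeLT ℝ (i + 1) := by
    rw [mem_degreeLT, degree_eq_natDegree hP.ne_zero, hPd]; norm_cast; omega
  let φ0 : ((Fin a → ℝ) × (Fin k → ℝ)) →ₗ[ℝ] ℝ[X] :=
    ((polOf i).comp s).coprod ((LinearMap.mulLeft ℝ P).comp (polOf k))
  have hφ0 : ∀ w, φ0 w = polOf i (s w.1) + P * polOf k w.2 := by
    intro w; simp [φ0]
  have hmem : ∀ w, φ0 w ∈ degreeLT ℝ n := by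
    intro w
    rw [hφ0]
    refine Submodule.add_mem _ (degreeLT_mono hin.le (polOf_mem _ _)) ?_
    exact mul_memLT hPm (polOf_mem k _) (by omega)
  have hq : ∀ w, qf L n (coefs n (φ0 w)) = qf L i (s w.1) := by
    intro w
    unfold qf
    rw [polOf_coefs n (hmem w), hφ0]
    have e : (polOf i (s w.1) + P * polOf k w.2) * (polOf i (s w.1) + P * polOf k w.2) =
      polOf i (s w.1) * polOf i (s w.1) + (P * (polOf i (s w.1) * polOf k w.2)
        + (P * (polOf i (s w.1) * polOf k w.2) + P * ((P * polOf k w.2) * polOf k w.2))) := by ring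
    rw [e, map_add, map_add, map_add]
    by_cases hk0 : k = 0
    · have : polOf k w.2 = 0 := by
        have h5 := mem_degreeLT.1 (polOf_mem k w.2)
        have h6 : (k : WithBot ℕ) = 0 := by rw [hk0]; rfl
        rw [h6] at h5
        simpa [Nat.WithBot.lt_zero_iff] using h5
      rw [this]; simp
    rw [hO' _ (mul_memLT (polOf_mem _ _) (polOf_mem _ _) (by omega)),
      hO' _ (mul_memLT (mul_memLT hPm (polOf_mem k _) (c := i + k) (by omega))
        (polOf_mem k _) (by omega))]
    simp
  have hnn : ∀ x, 0 ≤ qf L i (s x) := by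
    intro x
    by_cases hx : x = 0
    · subst hx; simp [qf]
    · exact (hs x hx).le
  have := hA.le_pos (by simp [hAB]) ((coefs n).comp φ0) ?_ ?_
  · simpa using this
  · rw [injective_iff_map_eq_zero]
    intro w hw
    rw [LinearMap.comp_apply] at hw
    have h1 : φ0 w = 0 := by rw [← polOf_coefs n (hmem w), hw, map_zero]
    have h2 : w.1 = 0 := by
      by_contra hne
      have h3 := hs _ hne
      rw [← hq, hw] at h3
      simp [qf] at h3
    rw [hφ0, h2] at h1
    simp [hP.ne_zero] at h1
    have h4 : w.2 = 0 := by rw [← coefs_polOf k w.2, h1, map_zero]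
    exact Prod.ext h2 h4
  · intro w
    rw [LinearMap.comp_apply, hq]
    exact hnn _

lemma qf_neg (L : ℝ[X] →ₗ[ℝ] ℝ) (n : ℕ) : qf (-L) n = fun v => - qf L n v := by
  ext v; simp [qf]

lemma step_neg (L : ℝ[X] →ₗ[ℝ] ℝ) (i n a b A B : ℕ) (hin : i < n) (hi : NDeg L i)
    (hz : ∀ m, i < m → m < n → ¬ NDeg L m)
    (ha : SqRep (qf L i) a b) (hA : SqRep (qf L n) A B) (hAB : A + B = n) :
    b + (n - i) / 2 ≤ B := by
  refine step_pos (-L) i n b a B A hin hi.neg ?_ ?_ ?_ (by omega)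
  · intro m h1 h2 h3
    apply hz m h1 h2
    simpa using h3.neg
  · rw [qf_neg]; exact ha.neg
  · rw [qf_neg]; exact hA.neg

lemma sgn_ne_zero {x : ℝ} : sgn x = 0 ↔ x = 0 := by
  unfold sgn
  split_ifs with h1 h2
  · simp [h1.ne]
  · simp [h2]
  · simp [h2]

lemma frob_minors (L L' : ℝ[X] →ₗ[ℝ] ℝ) (N : ℕ)
    (hs : ∀ m ≤ N, sgn (hank L m).det = sgn (hank L' m).det) :
    ∀ n ≤ N, NDeg L n → ∃ a b, a + b = n ∧ SqRep (qf L n) a b ∧ SqRep (qf L' n) a b := by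
  have hnd : ∀ m ≤ N, NDeg L m ↔ NDeg L' m := by
    intro m hm
    rw [ndeg_iff, ndeg_iff, Ne, Ne, ← sgn_ne_zero, ← sgn_ne_zero, hs m hm]
  intro n
  induction n using Nat.strong_induction_on with
  | _ n ih =>
    intro hn hL
    obtain ⟨A, B, hAB, hA, hB⟩ := exists_rep L n ((ndeg_iff _ _).1 hL)
    obtain ⟨A', B', hAB', hA', hB'⟩ := exists_rep L' n ((ndeg_iff _ _).1 ((hnd n hn).1 hL))
    have hpar : B % 2 = B' % 2 := by
      rw [hs n hn, hB'] at hB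
      rcases Nat.even_or_odd B with h | h <;> rcases Nat.even_or_odd B' with h' | h'
      · rw [Nat.even_iff.1 h, Nat.even_iff.1 h']
      · rw [h.neg_one_pow, h'.neg_one_pow] at hB; norm_num at hB
      · rw [h.neg_one_pow, h'.neg_one_pow] at hB; norm_num at hB
      · rw [Nat.odd_iff.1 h, Nat.odd_iff.1 h']
    suffices A = A' ∧ B = B' by
      obtain ⟨rfl, rfl⟩ := this
      exact ⟨A, B, hAB, hA, hA'⟩
    rcases Nat.eq_zero_or_pos n with rfl | hpos
    · omega
    classical
    have h00 : NDeg L 0 := by rw [ndeg_iff]; simp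
    obtain ⟨i, hi1, hi2, hi3⟩ : ∃ i, i < n ∧ NDeg L i ∧ ∀ m, i < m → m < n → ¬ NDeg L m := by
      refine ⟨Nat.findGreatest (NDeg L) (n - 1), ?_, ?_, ?_⟩
      · have := Nat.findGreatest_le (P := NDeg L) (n - 1); omega
      · exact Nat.findGreatest_spec (m := 0) (by omega) h00
      · intro m h1 h2
        exact Nat.findGreatest_is_greatest h1 (by omega)
    obtain ⟨a, b, hab, ha, ha'⟩ := ih i hi1 (by omega) hi2
    have e1 := step_pos L i n a b A B hi1 hi2 hi3 ha hA hAB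
    have e2 := step_neg L i n a b A B hi1 hi2 hi3 ha hA hAB
    have hi3' : ∀ m, i < m → m < n → ¬ NDeg L' m := fun m h1 h2 h3 =>
      hi3 m h1 h2 ((hnd m (by omega)).2 h3)
    have hi2' := (hnd i (by omega)).1 hi2
    have e3 := step_pos L' i n a b A' B' hi1 hi2' hi3' ha' hA' hAB'
    have e4 := step_neg L' i n a b A' B' hi1 hi2' hi3' ha' hA' hAB'
    omega
lemma sum_sort_aux {γ M : Type} [AddCommMonoid M] (R : Finset γ) [inst : Fintype R] (F : R → M)
    (g : γ → M) (h : ∀ t : R, F t = g t.1) : ∑ t : R, F t = ∑ t ∈ R, g t := by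
  rw [← Finset.sum_coe_sort R g, Finset.sum_congr rfl (fun t _ => h t)]
  congr 1
  ext x; simp

lemma card_pos_neg {κ : Type} [Fintype κ] (ε : κ → ℝ) (hε : ∀ i, ε i ≠ 0) :
    Nat.card {i // 0 < ε i} + Nat.card {i // ε i < 0} = Fintype.card κ := by
  classical
  rw [← Nat.card_eq_fintype_card, ← Nat.card_sum]
  apply Nat.card_congr
  symm
  refine (Equiv.sumCompl (fun i => 0 < ε i)).symm.trans (Equiv.sumCongr (Equiv.refl _) ?_)
  apply Equiv.subtypeEquivRight
  intro i
  have := hε i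
  constructor
  · intro h; exact lt_of_le_of_ne (not_lt.1 h) this
  · intro h; exact not_lt.2 h.le

lemma sum_sgn {κ : Type} [Fintype κ] (ε : κ → ℝ) :
    ((Nat.card {i // 0 < ε i} : ℕ) : ℤ) - (Nat.card {i // ε i < 0} : ℕ) = ∑ i, sgn (ε i) := by
  classical
  rw [Nat.card_eq_fintype_card, Nat.card_eq_fintype_card, Fintype.card_subtype,
    Fintype.card_subtype, Finset.card_filter, Finset.card_filter]
  push_cast
  rw [← Finset.sum_sub_distrib]
  apply Finset.sum_congr rfl
  intro i _
  unfold sgn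
  rcases lt_trichotomy (ε i) 0 with h | h | h
  · simp [h, h.not_gt]
  · simp [h]
  · simp [h, h.not_gt, h.ne']

lemma hermite_abs {κ : Type} [Fintype κ] (L : ℝ[X] →ₗ[ℝ] ℝ) (l : ℝ[X] →ₗ[ℝ] (κ → ℝ))
    (ε : κ → ℝ) (hε : ∀ i, ε i ≠ 0) (hq : ∀ f, L (f * f) = ∑ i, ε i * (l f i) ^ 2)
    (hinj : ∀ f ∈ degreeLT ℝ (Fintype.card κ), l f = 0 → f = 0) :
    NDeg L (Fintype.card κ) ∧ (∀ m, Fintype.card κ < m → ¬ NDeg L m) ∧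
    SqRep (qf L (Fintype.card κ)) (Nat.card {i // 0 < ε i}) (Nat.card {i // ε i < 0}) := by
  classical
  set k := Fintype.card κ with hk
  have hb : ∀ f g, L (f * g) = ∑ i, ε i * (l f i * l g i) := by
    intro f g
    have h1 := hq (f + g)
    have h2 := hq (f - g)
    have h3 : (f + g) * (f + g) = (f - g) * (f - g) + (4 : ℝ) • (f * g) := by
      rw [smul_eq_C_mul]
      have : (C (4 : ℝ) : ℝ[X]) = 4 := rfl
      rw [this]; ring
    rw [h3, map_add, h2, map_smul, smul_eq_mul] at h1
    have h4 : ∑ i, ε i * (l (f + g) i) ^ 2 =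
        ∑ i, ε i * (l (f - g) i) ^ 2 + 4 * ∑ i, ε i * (l f i * l g i) := by
      rw [Finset.mul_sum, ← Finset.sum_add_distrib]
      apply Finset.sum_congr rfl
      intro i _
      simp only [map_add, map_sub, Pi.add_apply, Pi.sub_apply]
      ring
    linarith
  have hinj' : Function.Injective (l.comp (polOf k)) := by
    rw [injective_iff_map_eq_zero]
    intro c hc
    have := hinj _ (polOf_mem k c) hc
    rw [← coefs_polOf k c, this, map_zero]
  have hsurj : Function.Surjective (l.comp (polOf k)) := by
    apply (LinearMap.injective_iff_surjective_of_finrank_eq_finrank _).1 hinj'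
    simp [hk]
  refine ⟨?_, ?_, ?_⟩
  · intro f hf hg
    apply hinj f hf
    ext i
    obtain ⟨c, hc⟩ := hsurj (Pi.single i 1)
    have h1 := hg _ (polOf_mem k c)
    rw [hb, Finset.sum_eq_single i] at h1
    · have h2 : l (polOf k c) i = 1 := by
        have := congrFun hc i
        simpa using this
      rw [h2] at h1
      simpa [hε i] using h1
    · intro j _ hj
      have h2 : l (polOf k c) j = 0 := by
        have := congrFun hc j
        simpa [hj] using this
      rw [h2]; simp
    · simp
  · intro m hm hN
    have hker : LinearMap.ker (l.comp (polOf m)) ≠ ⊥ := by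
      apply LinearMap.ker_ne_bot_of_finrank_lt
      simpa [hk] using hm
    obtain ⟨c, hc, hne⟩ := (Submodule.ne_bot_iff _).1 hker
    apply hne
    have hc' : l (polOf m c) = 0 := by simpa using hc
    have := hN _ (polOf_mem m c) (by intro g _; rw [hb, hc']; simp)
    rw [← coefs_polOf m c, this, map_zero]
  · exact ⟨κ, inferInstance, l.comp (polOf k), ε, hsurj, hε, fun v => hq _, rfl, rfl⟩

/-- the Hermite functional. -/
noncomputable def LH (P A : ℝ[X]) : ℝ[X] →ₗ[ℝ] ℝ where
  toFun f := LinearMap.trace ℝ (AdjoinRoot P) (LinearMap.mulLeft ℝ (AdjoinRoot.mk P (A * f)))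
  map_add' f g := by
    rw [← LinearMap.map_add (LinearMap.trace ℝ (AdjoinRoot P))]
    congr 1
    apply LinearMap.ext
    intro x
    rw [LinearMap.add_apply, LinearMap.mulLeft_apply, LinearMap.mulLeft_apply,
      LinearMap.mulLeft_apply, mul_add, map_add, add_mul]
  map_smul' c f := by
    rw [RingHom.id_apply, ← map_smul]
    congr 1
    apply LinearMap.ext
    intro x
    have : AdjoinRoot.mk P (A * c • f) = c • AdjoinRoot.mk P (A * f) := by
      rw [mul_smul_comm]; rfl
    rw [LinearMap.mulLeft_apply, this, LinearMap.smul_apply, LinearMap.mulLeft_apply,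
      smul_mul_assoc]

lemma minor_eq (p : ℕ) (P A : ℝ[X]) (m : ℕ) (h : m ≤ p) :
    pMinor p (HerMat p P A) m h = (hank (LH P A) m).det := rfl

lemma LH_eq (P A : ℝ[X]) (hP : P ≠ 0) (f : ℝ[X]) :
    LH P A f = ∑ z ∈ (P.map Complex.ofRealHom).roots.toFinset,
      ((P.map Complex.ofRealHom).rootMultiplicity z : ℝ) * (aeval z A * aeval z f : ℂ).re := by
  have h := trace_formula P hP (A * f)
  have h2 : LH P A f = (((LinearMap.trace ℝ (AdjoinRoot P)
    (LinearMap.mulLeft ℝ (AdjoinRoot.mk P (A * f))) : ℝ) : ℂ)).re := by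
    rw [Complex.ofReal_re]; rfl
  rw [h2, h, Finset.sum_multiset_map_count, Complex.re_sum]
  apply Finset.sum_congr rfl
  intro z _
  rw [count_roots, nsmul_eq_mul, ← Complex.ofReal_natCast, Complex.re_ofReal_mul]
  congr 2
  have e : eval z ((A * f).map Complex.ofRealHom) = aeval z (A * f) := by
    rw [eval_map]; rfl
  rw [e, map_mul]

lemma aeval_real (f : ℝ[X]) (t : ℝ) : aeval (t : ℂ) f = ((f.eval t : ℝ) : ℂ) := by
  have := aeval_algebraMap_apply_eq_algebraMap_eval (A := ℂ) t f
  simpa using this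

lemma mult_conj (P : ℝ[X]) (z : ℂ) :
    (P.map Complex.ofRealHom).rootMultiplicity ((starRingEnd ℂ) z) =
    (P.map Complex.ofRealHom).rootMultiplicity z := by
  rw [eq_rootMultiplicity_map (starRingEnd ℂ).injective z, Polynomial.map_map]
  congr 2
  ext x
  simp

lemma mem_rootsC (P : ℝ[X]) (hP : P ≠ 0) (z : ℂ) :
    z ∈ (P.map Complex.ofRealHom).roots.toFinset ↔ aeval z P = 0 := by
  rw [Multiset.mem_toFinset, mem_roots', IsRoot, eval_map]
  have : P.map Complex.ofRealHom ≠ 0 := by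
    simpa using (Polynomial.map_ne_zero_iff Complex.ofRealHom.injective).2 hP
  simp only [ne_eq, this, not_false_eq_true, true_and]
  rfl

lemma sum_split (P : ℝ[X]) (hP : P ≠ 0) (F : ℂ → ℝ) (hF : ∀ z, F ((starRingEnd ℂ) z) = F z) :
    ∑ z ∈ (P.map Complex.ofRealHom).roots.toFinset, F z =
    ∑ t ∈ P.roots.toFinset, F (t : ℂ) +
      2 * ∑ z ∈ (P.map Complex.ofRealHom).roots.toFinset.filter (fun z => 0 < z.im), F z := by
  classical
  set S := (P.map Complex.ofRealHom).roots.toFinset with hS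
  have hconj : ∀ z ∈ S, (starRingEnd ℂ) z ∈ S := by
    intro z hz
    rw [hS, mem_rootsC P hP] at *
    rw [aeval_conj, hz, map_zero]
  rw [← Finset.sum_filter_add_sum_filter_not S (fun z => z.im = 0)]
  congr 1
  · symm
    apply Finset.sum_bij (fun (t : ℝ) _ => (t : ℂ))
    · intro t ht
      rw [Finset.mem_filter, hS, mem_rootsC P hP, aeval_real]
      have : P.eval t = 0 := by
        rw [Multiset.mem_toFinset, mem_roots hP] at ht; exact ht
      simp [this]
    · intro a _ b _ h
      exact_mod_cast h
    · intro z hz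
      rw [Finset.mem_filter, hS, mem_rootsC P hP] at hz
      have e : ((z.re : ℝ) : ℂ) = z := by
        apply Complex.ext <;> simp [hz.2]
      refine ⟨z.re, ?_, e⟩
      rw [Multiset.mem_toFinset, mem_roots hP, IsRoot]
      have := hz.1
      rw [← e, aeval_real] at this
      exact_mod_cast this
    · intro _ _; rfl
  · rw [← Finset.sum_filter_add_sum_filter_not (S.filter (fun z => ¬ z.im = 0))
      (fun z => 0 < z.im), two_mul, Finset.filter_filter, Finset.filter_filter]
    congr 1
    · apply Finset.sum_congr _ (fun _ _ => rfl)
      ext z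
      simp only [Finset.mem_filter]
      constructor
      · rintro ⟨a, b, c⟩; exact ⟨a, c⟩
      · rintro ⟨a, c⟩; exact ⟨a, c.ne', c⟩
    · apply Finset.sum_bij (fun z _ => (starRingEnd ℂ) z)
      · intro z hz
        simp only [Finset.mem_filter] at *
        refine ⟨hconj z hz.1, ?_⟩
        rw [Complex.conj_im]
        have := lt_of_le_of_ne (not_lt.1 hz.2.2) hz.2.1
        linarith
      · intro a _ b _ h
        exact (starRingEnd ℂ).injective h
      · intro z hz
        simp only [Finset.mem_filter] at *
        refine ⟨(starRingEnd ℂ) z, ?_, by simp⟩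
        refine ⟨hconj z hz.1, ?_, ?_⟩
        · rw [Complex.conj_im]; linarith [hz.2]
        · rw [Complex.conj_im]; linarith [hz.2]
      · intro z _
        rw [hF]

lemma hermite_sig (p : ℕ) (P A : ℝ[X]) (hP : P ≠ 0) (hp : P.natDegree = p) :
    ∃ k a b, k ≤ p ∧ a + b = k ∧ NDeg (LH P A) k ∧ (∀ m, k < m → ¬ NDeg (LH P A) m) ∧
      SqRep (qf (LH P A) k) a b ∧ ((a : ℤ) - b = ∑ t ∈ P.roots.toFinset, sgn (A.eval t)) := by
  classical
  set PC := P.map Complex.ofRealHom with hPC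
  set S := PC.roots.toFinset with hS
  have hPC0 : PC ≠ 0 := (Polynomial.map_ne_zero_iff Complex.ofRealHom.injective).2 hP
  let R : Finset ℝ := P.roots.toFinset.filter (fun t => A.eval t ≠ 0)
  let U : Finset ℂ := (S.filter (fun z => 0 < z.im)).filter (fun z => aeval z A ≠ 0)
  have hmS : ∀ z ∈ S, 0 < PC.rootMultiplicity z := by
    intro z hz
    rw [hS, Multiset.mem_toFinset, mem_roots hPC0] at hz
    exact (rootMultiplicity_pos hPC0).2 hz
  have hRS : ∀ t ∈ R, (t : ℂ) ∈ S := by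
    intro t ht
    rw [hS, mem_rootsC P hP, aeval_real]
    have := (Finset.mem_filter.1 ht).1
    rw [Multiset.mem_toFinset, mem_roots hP, IsRoot] at this
    simp [this]
  have hsq : ∀ z : ℂ, ∃ c : ℂ, c ^ 2 = (PC.rootMultiplicity z : ℂ) * aeval z A := by
    intro z
    exact IsAlgClosed.exists_pow_nat_eq _ (by norm_num)
  choose sq hsq using hsq
  have hsq0 : ∀ z ∈ U, sq z ≠ 0 := by
    intro z hz h
    have h1 := hsq z
    rw [h] at h1
    have hz1 := (Finset.mem_filter.1 hz).2
    have hz2 := hmS z (Finset.mem_filter.1 (Finset.mem_filter.1 hz).1).1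
    have : (PC.rootMultiplicity z : ℂ) ≠ 0 := by exact_mod_cast hz2.ne'
    have h3 := mul_ne_zero this hz1
    apply h3
    rw [← h1]; simp
  let κ := R ⊕ (U ⊕ U)
  let evr : ℂ → ℝ[X] →ₗ[ℝ] ℂ := fun z => (aeval z : ℝ[X] →ₐ[ℝ] ℂ).toLinearMap
  let l : ℝ[X] →ₗ[ℝ] (κ → ℝ) := LinearMap.pi (fun i => match i with
    | Sum.inl t => Polynomial.leval t.1
    | Sum.inr (Sum.inl z) => Complex.reLm.comp ((LinearMap.mulLeft ℝ (sq z.1)).comp (evr z.1))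
    | Sum.inr (Sum.inr z) => Complex.imLm.comp ((LinearMap.mulLeft ℝ (sq z.1)).comp (evr z.1)))
  have l1 : ∀ f (t : R), l f (Sum.inl t) = f.eval t.1 := fun f t => rfl
  have l2 : ∀ f (z : U), l f (Sum.inr (Sum.inl z)) = (sq z.1 * aeval z.1 f).re := fun f t => rfl
  have l3 : ∀ f (z : U), l f (Sum.inr (Sum.inr z)) = (sq z.1 * aeval z.1 f).im := fun f t => rfl
  let ε : κ → ℝ := fun i => match i with
    | Sum.inl t => (PC.rootMultiplicity (t.1 : ℂ) : ℝ) * A.eval t.1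
    | Sum.inr (Sum.inl _) => 2
    | Sum.inr (Sum.inr _) => -2
  have hε : ∀ i, ε i ≠ 0 := by
    rintro (t | z | z)
    · have h1 := hmS _ (hRS t.1 t.2)
      have h2 := (Finset.mem_filter.1 t.2).2
      have : (PC.rootMultiplicity (t.1 : ℂ) : ℝ) ≠ 0 := by exact_mod_cast h1.ne'
      exact mul_ne_zero this h2
    · simp [ε]
    · simp [ε]
  have hcard : Fintype.card κ = R.card + (U.card + U.card) := by
    simp [κ]
  -- the set of complex nodes
  let Z : Finset ℂ := R.image (fun t : ℝ => (t : ℂ)) ∪ (U ∪ U.image (starRingEnd ℂ))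
  have hUim : ∀ z ∈ U, 0 < z.im := fun z hz =>
    (Finset.mem_filter.1 (Finset.mem_filter.1 hz).1).2
  have hZcard : Z.card = Fintype.card κ := by
    rw [hcard, Finset.card_union_of_disjoint, Finset.card_union_of_disjoint,
      Finset.card_image_of_injective _ Complex.ofReal_injective,
      Finset.card_image_of_injective _ (starRingEnd ℂ).injective]
    · rw [Finset.disjoint_left]
      intro z hz hz'
      obtain ⟨w, hw, rfl⟩ := Finset.mem_image.1 hz'
      have h1 := hUim _ hz
      have h2 := hUim _ hw
      rw [Complex.conj_im] at h1
      linarith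
    · rw [Finset.disjoint_left]
      intro z hz hz'
      obtain ⟨t, ht, rfl⟩ := Finset.mem_image.1 hz
      rcases Finset.mem_union.1 hz' with h | h
      · have := hUim _ h
        simp at this
      · obtain ⟨w, hw, hwt⟩ := Finset.mem_image.1 h
        have h2 := hUim _ hw
        have h3 := congrArg Complex.im hwt
        rw [Complex.conj_im, Complex.ofReal_im] at h3
        linarith
  have hZS : Z ⊆ S := by
    intro z hz
    rcases Finset.mem_union.1 hz with h | h
    · obtain ⟨t, ht, rfl⟩ := Finset.mem_image.1 h
      exact hRS t ht
    rcases Finset.mem_union.1 h with h | h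
    · exact (Finset.mem_filter.1 (Finset.mem_filter.1 h).1).1
    · obtain ⟨w, hw, rfl⟩ := Finset.mem_image.1 h
      have h1 := (Finset.mem_filter.1 (Finset.mem_filter.1 hw).1).1
      rw [hS, mem_rootsC P hP] at *
      rw [aeval_conj, h1, map_zero]
  have hkp : Fintype.card κ ≤ p := by
    rw [← hZcard]
    refine (Finset.card_le_card hZS).trans ((Multiset.toFinset_card_le _).trans ?_)
    refine (card_roots' PC).trans ?_
    rw [hPC, natDegree_map, hp]
  have hinj : ∀ f ∈ degreeLT ℝ (Fintype.card κ), l f = 0 → f = 0 := by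
    intro f hf hlf
    have hU0 : ∀ z ∈ U, aeval z f = 0 := by
      intro z hz
      have h1 := congrFun hlf (Sum.inr (Sum.inl ⟨z, hz⟩))
      have h2 := congrFun hlf (Sum.inr (Sum.inr ⟨z, hz⟩))
      rw [l2] at h1
      rw [l3] at h2
      have h3 : sq z * aeval z f = 0 := Complex.ext h1 h2
      exact (mul_eq_zero.1 h3).resolve_left (hsq0 z hz)
    have : f.map Complex.ofRealHom = 0 := by
      apply eq_zero_of_degree_lt_of_eval_finset_eq_zero Z
      · rw [degree_map, hZcard]
        exact mem_degreeLT.1 hf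
      · intro z hz
        have e : eval z (f.map Complex.ofRealHom) = aeval z f := by
          rw [eval_map]; rfl
        rw [e]
        rcases Finset.mem_union.1 hz with h | h
        · obtain ⟨t, ht, rfl⟩ := Finset.mem_image.1 h
          have h1 := congrFun hlf (Sum.inl ⟨t, ht⟩)
          rw [l1] at h1
          rw [aeval_real]
          simpa using h1
        rcases Finset.mem_union.1 h with h | h
        · exact hU0 z h
        · obtain ⟨w, hw, rfl⟩ := Finset.mem_image.1 h
          rw [aeval_conj, hU0 w hw, map_zero]
    exact (Polynomial.map_eq_zero_iff Complex.ofRealHom.injective).1 this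
  have hq : ∀ f, LH P A (f * f) = ∑ i, ε i * (l f i) ^ 2 := by
    intro f
    rw [LH_eq P A hP, sum_split P hP]
    · rw [Fintype.sum_sum_type, Fintype.sum_sum_type]
      congr 1
      · have e1 : ∀ t : R, ε (Sum.inl t) * l f (Sum.inl t) ^ 2 =
          (fun t : ℝ => (PC.rootMultiplicity (t : ℂ) : ℝ) * A.eval t * f.eval t ^ 2) t.1 :=
          fun t => rfl
        rw [sum_sort_aux R _
          (fun t : ℝ => (PC.rootMultiplicity (t : ℂ) : ℝ) * A.eval t * f.eval t ^ 2) e1]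
        rw [Finset.sum_filter]
        apply Finset.sum_congr rfl
        intro t _
        rw [aeval_real, aeval_real]
        by_cases h : A.eval t = 0
        · simp [h]
        · simp only [ne_eq, h, not_false_eq_true, if_true]
          rw [← Complex.ofReal_mul, Complex.ofReal_re, eval_mul]
          ring
      · rw [← Finset.sum_add_distrib]
        have e1 : ∀ z : U, ε (Sum.inr (Sum.inl z)) * l f (Sum.inr (Sum.inl z)) ^ 2 +
          ε (Sum.inr (Sum.inr z)) * l f (Sum.inr (Sum.inr z)) ^ 2 =
          (fun z : ℂ => 2 * (sq z * aeval z f).re ^ 2 + (-2) * (sq z * aeval z f).im ^ 2) z.1 :=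
          fun t => rfl
        rw [sum_sort_aux U _
          (fun z : ℂ => 2 * (sq z * aeval z f).re ^ 2 + (-2) * (sq z * aeval z f).im ^ 2) e1, Finset.mul_sum]
        symm
        rw [Finset.sum_filter]
        apply Finset.sum_congr rfl
        intro z _
        by_cases h : aeval z A = 0
        · simp [h]
        · simp only [ne_eq, h, not_false_eq_true, if_true]
          have h1 : (PC.rootMultiplicity z : ℝ) * (aeval z A * aeval z (f * f) : ℂ).re =
            ((sq z * aeval z f) ^ 2).re := by
            rw [mul_pow, hsq, ← Complex.re_ofReal_mul, map_mul]
            congr 1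
            push_cast
            ring
          have h5 : ∀ w : ℂ, (w ^ 2).re = w.re ^ 2 - w.im ^ 2 := by
            intro w; rw [pow_two, Complex.mul_re]; ring
          rw [h1, h5]
          ring
    · intro z
      rw [mult_conj, aeval_conj, aeval_conj, ← map_mul, Complex.conj_re]
  obtain ⟨h1, h2, h3⟩ := hermite_abs (LH P A) l ε hε hq hinj
  refine ⟨_, _, _, hkp, card_pos_neg ε hε, h1, h2, h3, ?_⟩
  rw [sum_sgn, Fintype.sum_sum_type, Fintype.sum_sum_type]
  have e1 : ∀ t : R, sgn (ε (Sum.inl t)) = (fun t : ℝ => sgn (A.eval t)) t.1 := by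
    intro t
    have h1 := hmS _ (hRS t.1 t.2)
    have h2 : (0 : ℝ) < (PC.rootMultiplicity (t.1 : ℂ) : ℝ) := by exact_mod_cast h1
    simp only [sgn, ε, mul_neg_iff, h2, h2.not_gt, mul_eq_zero, h2.ne']
    simp
  rw [sum_sort_aux R _ (fun t : ℝ => sgn (A.eval t)) e1, Finset.sum_filter]
  have e2 : sgn 2 = 1 := by simp [sgn]
  have e3 : sgn (-2) = -1 := by simp [sgn]
  have e4 : ∀ z : U, sgn (ε (Sum.inr (Sum.inl z))) = 1 := fun z => e2
  have e5 : ∀ z : U, sgn (ε (Sum.inr (Sum.inr z))) = -1 := fun z => e3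
  simp only [e4, e5]
  simp only [Finset.sum_const, smul_neg, add_neg_cancel, add_zero]
  apply Finset.sum_congr rfl
  intro t _
  by_cases h : A.eval t = 0
  · simp [h, sgn]
  · simp [h]

lemma taq_eq (p : ℕ) (P P' A A' : ℝ[X]) (hP : P ≠ 0) (hP' : P' ≠ 0) (hp : P.natDegree = p)
    (hp' : P'.natDegree = p)
    (hs : ∀ (m : ℕ) (h : m ≤ p), sgn (pMinor p (HerMat p P A) m h) =
      sgn (pMinor p (HerMat p P' A') m h)) :
    ∑ t ∈ P.roots.toFinset, sgn (A.eval t) = ∑ t ∈ P'.roots.toFinset, sgn (A'.eval t) := by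
  have hs' : ∀ m ≤ p, sgn (hank (LH P A) m).det = sgn (hank (LH P' A') m).det := hs
  have hnd : ∀ m ≤ p, NDeg (LH P A) m ↔ NDeg (LH P' A') m := by
    intro m hm
    rw [ndeg_iff, ndeg_iff, Ne, Ne, ← sgn_ne_zero, ← sgn_ne_zero, hs' m hm]
  obtain ⟨k, a, b, hk, hab, hN, hmax, hrep, hsum⟩ := hermite_sig p P A hP hp
  obtain ⟨k', a', b', hk', hab', hN', hmax', hrep', hsum'⟩ := hermite_sig p P' A' hP' hp'
  have hkk : k = k' := by
    rcases lt_trichotomy k k' with h | h | h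
    · exact absurd ((hnd k' hk').2 hN') (hmax _ h)
    · exact h
    · exact absurd ((hnd k hk).1 hN) (hmax' _ h)
  subst hkk
  obtain ⟨c, d, hcd, h1, h2⟩ := frob_minors (LH P A) (LH P' A') p hs' k hk hN
  obtain ⟨rfl, rfl⟩ := hrep.unique h1 (by simp [hab]) (by simp [hcd])
  obtain ⟨rfl, rfl⟩ := hrep'.unique h2 (by simp [hab']) (by simp [hcd])
  rw [← hsum, ← hsum']
lemma sgn_sign (a : ℝ) : sgn a = ((SignType.sign a : SignType) : ℤ) := by
  unfold sgn
  rcases lt_trichotomy a 0 with h | h | h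
  · simp [h]
  · simp [h]
  · simp [h, h.not_gt, h.ne']

/-- the vector of polynomials `Q, P', …, P^{(n)}`. -/
noncomputable def rv (n : ℕ) (P Q : ℝ[X]) (i : Fin (n + 1)) : ℝ[X] :=
  if i.val = 0 then Q else Polynomial.derivative^[i.val] P

/-- the sign vector at a point. -/
noncomputable def sv (n : ℕ) (P Q : ℝ[X]) (t : ℝ) : Fin (n + 1) → SignType :=
  fun i => SignType.sign ((rv n P Q i).eval t)

/-- the number of roots with a given sign vector. -/
noncomputable def cv (n : ℕ) (P Q : ℝ[X]) (x : Fin (n + 1) → SignType) : ℤ :=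
  ((P.roots.toFinset.filter (fun t => sv n P Q t = x)).card : ℤ)

/-- extension of an exponent vector. -/
def exv (n : ℕ) (α : Fin (n + 1) → ℕ) (h : ℕ) : ℕ := if h' : h < n + 1 then α ⟨h, h'⟩ else 0

lemma icc_prod {M : Type} [CommMonoid M] (n : ℕ) (f : ℕ → M) :
    ∏ h ∈ Finset.Icc 1 n, f h = ∏ i : Fin n, f (i.val + 1) := by
  rw [Fin.prod_univ_eq_prod_range (fun i => f (i + 1)) n, Finset.range_eq_Ico,
    Finset.prod_Ico_add' f 0 n 1]
  rfl

lemma exv_succ (n : ℕ) (α : Fin (n + 1) → ℕ) (i : Fin n) : exv n α (i.val + 1) = α i.succ := by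
  unfold exv
  rw [dif_pos (by omega)]
  rfl

lemma pder_eq (n : ℕ) (P Q : ℝ[X]) (α : Fin (n + 1) → ℕ) :
    pderProd (n + 1) P Q (exv n α) (α 0) = ∏ i, rv n P Q i ^ α i := by
  unfold pderProd
  rw [Nat.add_sub_cancel, icc_prod, Fin.prod_univ_succ, mul_comm]
  congr 1
  apply Finset.prod_congr rfl
  intro i _
  rw [exv_succ]
  simp [rv]

lemma adm (n : ℕ) (α : Fin (n + 1) → ℕ) (h2 : ∀ i, α i ≤ 2) (hs : nsupp α ≤ bit (n + 1)) :
    admissible (n + 1) (exv n α) (α 0) := by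
  refine ⟨?_, h2 0, ?_⟩
  · intro h
    unfold exv
    split_ifs
    · exact h2 _
    · omega
  · refine le_trans (le_of_eq ?_) hs
    unfold nsupp
    rw [Nat.add_sub_cancel, Finset.card_filter, Fin.sum_univ_succ, add_comm]
    congr 1
    have := icc_prod (M := Multiplicative ℕ) n
      (fun h => Multiplicative.ofAdd (if exv n α h ≠ 0 then 1 else 0))
    have h3 : ∑ h ∈ Finset.Icc 1 n, (if exv n α h ≠ 0 then 1 else 0) =
      ∑ i : Fin n, (if exv n α (i.val + 1) ≠ 0 then 1 else 0) := this
    rw [h3]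
    apply Finset.sum_congr rfl
    intro i _
    rw [exv_succ]
    by_cases h : α i.succ = 0 <;> simp [h]

lemma sgn_eval (n : ℕ) (P Q : ℝ[X]) (α : Fin (n + 1) → ℕ) (t : ℝ) :
    sgn ((∏ i, rv n P Q i ^ α i).eval t) = ∏ i, ((sv n P Q t i : SignType) : ℤ) ^ α i := by
  rw [sgn_sign, eval_prod]
  have : SignType.sign (∏ i, eval t (rv n P Q i ^ α i)) = ∏ i, (sv n P Q t i) ^ α i := by
    have h := map_prod (signHom : ℝ →*₀ SignType) (fun i => eval t (rv n P Q i ^ α i)) Finset.univ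
    refine h.trans ?_
    apply Finset.prod_congr rfl
    intro i _
    rw [eval_pow, map_pow]
    rfl
  rw [this]
  have h := map_prod (SignType.castHom : SignType →*₀ ℤ) (fun i => sv n P Q t i ^ α i) Finset.univ
  refine h.trans ?_
  apply Finset.prod_congr rfl
  intro i _
  rw [map_pow]
  rfl

lemma cv_sum (n : ℕ) (P Q : ℝ[X]) (F : (Fin (n + 1) → SignType) → ℤ) :
    ∑ x, cv n P Q x * F x = ∑ t ∈ P.roots.toFinset, F (sv n P Q t) := by
  rw [← Finset.sum_fiberwise P.roots.toFinset (sv n P Q)]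
  apply Finset.sum_congr rfl
  intro x _
  rw [Finset.sum_congr rfl (g := fun _ => F x)]
  · simp [cv]
  · intro t ht
    rw [(Finset.mem_filter.1 ht).2]

lemma cv_eq (n : ℕ) (P Q P' Q' : ℝ[X]) (hP : P ≠ 0) (hP' : P' ≠ 0)
    (h₁ : P.natDegree = n + 1) (h₂ : P'.natDegree = n + 1)
    (hdata : ∀ (α : ℕ → ℕ) (b : ℕ), admissible (n + 1) α b → ∀ (m : ℕ) (h : m ≤ n + 1),
      sgn (pMinor (n + 1) (HerMat (n + 1) P (pderProd (n + 1) P Q α b)) m h) =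
      sgn (pMinor (n + 1) (HerMat (n + 1) P' (pderProd (n + 1) P' Q' α b)) m h)) :
    ∀ x, cv n P Q x = cv n P' Q' x := by
  apply signdet (n + 1) (by omega) (n + 1)
  · intro x; exact Int.natCast_nonneg _
  · intro x; exact Int.natCast_nonneg _
  · have := cv_sum n P Q (fun _ => 1)
    simp only [mul_one] at this
    rw [this]
    have h := (Multiset.toFinset_card_le P.roots).trans (card_roots' P)
    rw [h₁] at h
    simp only [Finset.sum_const, nsmul_eq_mul, mul_one]
    exact_mod_cast h
  · intro α h2 hs
    have e := taq_eq (n + 1) P P' _ _ hP hP' h₁ h₂ (hdata _ _ (adm n α h2 hs))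
    rw [pder_eq, pder_eq] at e
    simp only [sgn_eval] at e
    unfold momt
    rw [cv_sum n P Q (fun x => ∏ i, ((x i : SignType) : ℤ) ^ α i),
      cv_sum n P' Q' (fun x => ∏ i, ((x i : SignType) : ℤ) ^ α i)]
    exact e

lemma transfer (n : ℕ) (P Q P' Q' : ℝ[X]) (hP : P ≠ 0) (hP' : P' ≠ 0)
    (hc : ∀ x, cv n P Q x = cv n P' Q' x) (η : ℕ → ℤ) (s : ℤ)
    (h : ∃ θ : ℝ, P.eval θ = 0 ∧
          (∀ k, 1 ≤ k → k ≤ n → sgn ((Polynomial.derivative^[k] P).eval θ) = η k) ∧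
          sgn (Q.eval θ) = s) :
    ∃ θ : ℝ, P'.eval θ = 0 ∧
          (∀ k, 1 ≤ k → k ≤ n → sgn ((Polynomial.derivative^[k] P').eval θ) = η k) ∧
          sgn (Q'.eval θ) = s := by
  obtain ⟨θ, h0, h1, h2⟩ := h
  have hm : θ ∈ P.roots.toFinset.filter (fun t => sv n P Q t = sv n P Q θ) := by
    rw [Finset.mem_filter, Multiset.mem_toFinset, mem_roots hP]
    exact ⟨h0, rfl⟩
  have hpos : 0 < cv n P' Q' (sv n P Q θ) := by
    rw [← hc]
    have := Finset.card_pos.2 ⟨θ, hm⟩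
    unfold cv
    exact_mod_cast this
  unfold cv at hpos
  obtain ⟨t, ht⟩ := Finset.card_pos.1 (by exact_mod_cast hpos)
  rw [Finset.mem_filter, Multiset.mem_toFinset, mem_roots hP'] at ht
  refine ⟨t, ht.1, ?_, ?_⟩
  · intro k hk hkn
    have := congrFun ht.2 ⟨k, by omega⟩
    simp only [sv, rv, show k ≠ 0 by omega, if_false] at this
    rw [← h1 k hk hkn, sgn_sign, sgn_sign, this]
  · have := congrFun ht.2 0
    simp only [sv, rv, Fin.val_zero, if_true] at this
    rw [← h2, sgn_sign, sgn_sign, this]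

/-- Corollary 2.13: the signs of all principal minors of the Hermite matrices `Her(P; A)`, for
all products `A` of at most `bit p` of the derivatives `P', …, P^{(p-1)}`, each raised to the
power `1` or `2`, optionally multiplied by `Q` or `Q²`, determine the Thom encoding of each real
root of `P` and the sign of `Q` at each such root: if two pairs `(P₁, Q₁)`, `(P₂, Q₂)` of degree
`p` give the same sign data, they realize the same pairs (Thom encoding, sign of `Q`). -/
theorem minors_determine_thom_and_sign (p : ℕ) (hp : 1 ≤ p) (P₁ Q₁ P₂ Q₂ : Polynomial ℝ)
    (h₁ : P₁.natDegree = p) (h₂ : P₂.natDegree = p)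
    (hdata : ∀ (α : ℕ → ℕ) (b : ℕ), admissible p α b → ∀ (m : ℕ) (h : m ≤ p),
      sgn (pMinor p (HerMat p P₁ (pderProd p P₁ Q₁ α b)) m h) =
      sgn (pMinor p (HerMat p P₂ (pderProd p P₂ Q₂ α b)) m h)) :
    ∀ (η : ℕ → ℤ) (s : ℤ),
      (∃ θ : ℝ, P₁.eval θ = 0 ∧
          (∀ k, 1 ≤ k → k ≤ p - 1 → sgn ((Polynomial.derivative^[k] P₁).eval θ) = η k) ∧
          sgn (Q₁.eval θ) = s) ↔
      (∃ θ : ℝ, P₂.eval θ = 0 ∧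
          (∀ k, 1 ≤ k → k ≤ p - 1 → sgn ((Polynomial.derivative^[k] P₂).eval θ) = η k) ∧
          sgn (Q₂.eval θ) = s) := by
  intro η s
  obtain ⟨n, rfl⟩ : ∃ n, p = n + 1 := ⟨p - 1, by omega⟩
  have hP₁ : P₁ ≠ 0 := by rintro rfl; simp at h₁
  have hP₂ : P₂ ≠ 0 := by rintro rfl; simp at h₂
  have hc := cv_eq n P₁ Q₁ P₂ Q₂ hP₁ hP₂ h₁ h₂ hdata
  exact ⟨transfer n P₁ Q₁ P₂ Q₂ hP₁ hP₂ hc η s,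
    transfer n P₂ Q₂ P₁ Q₁ hP₂ hP₁ (fun x => (hc x).symm) η s⟩
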